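/- For every integer n ≥ 2, every real μ > 1, and every integer m ≥ 0, the infinite product Φ^{(n,m)}(ω) = ∏_{k=m}^{∞} A^{(n,k)}(e^{-iω/2^{k+1}}) converges for every ω ∈ ℝ (uniformly on compact subsets of ℝ), and the resulting function Φ^{(n,m)} : ℝ → ℂ is continuous with Φ^{(n,m)}(0) = 1. -/

import Mathlib

open MeasureTheory Filter Complex

/-- Binomial coefficient `binom p q` extended to integer `q`, zero outside `0 ≤ q ≤ p`. -/
noncomputable def binomZ (p : ℕ) (q : ℤ) : ℝ :=
  if 0 ≤ q then (p.choose q.toNat : ℝ) else 0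

/-- The nonstationary mask `a^{(n,m)}_α` with tension parameter `μ`. -/
noncomputable def maskNS (n m : ℕ) (μ : ℝ) (α : ℤ) : ℝ :=
  if m = 0 then (if α = 0 ∨ α = 1 then 1/2 else 0)
  else if 0 ≤ α ∧ α ≤ (n : ℤ) + 1 then
    (2 : ℝ) ^ (-((n : ℝ) + 1 + (m : ℝ) ^ (-μ))) *
      (binomZ (n+1) α + 4 * ((2 : ℝ) ^ ((m : ℝ) ^ (-μ)) - 1) * binomZ (n-1) (α-1))
  else 0

/-- The symbol `A^{(n,m)}(z) = Σ_{α=0}^{n+1} a^{(n,m)}_α z^α`. -/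
noncomputable def symbolNS (n m : ℕ) (μ : ℝ) (z : ℂ) : ℂ :=
  ∑ α ∈ Finset.range (n+2), (maskNS n m μ (α : ℤ) : ℂ) * z ^ α

/-- Partial product `∏_{k=m}^{N-1} A^{(n,k)}(e^{-iω/2^{k+1}})` of the infinite product
defining the Fourier transform `Φ^{(n,m)}` of the refinable ripplet `φ^{(n,m)}`. -/
noncomputable def partialProdNS (n m : ℕ) (μ : ℝ) (ω : ℝ) (N : ℕ) : ℂ :=
  ∏ k ∈ Finset.Ico m N, symbolNS n k μ (Complex.exp (-(Complex.I * ω) / 2 ^ (k + 1)))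

/-!
Each mask `a^{(n,k)}` is a probability vector on `{0, …, n+1}`: its entries are nonnegative, and
for `k ≥ 1` the factor `4` is exactly what makes them sum to `1`, since with `t = k^{-μ}` one has
`2 ^ (n+1) + 4 (2 ^ t - 1) 2 ^ (n-1) = 2 ^ (n+1+t)`. So the symbol at `z` is a convex combination
of powers of `z`, and on the unit circle it differs from `1` by at most `(n+1) |z - 1|`. At
`z = e^{-iω/2^{k+1}}` this is at most `(n+1) |ω| / 2^{k+1}`, which is summable in `k` uniformly
for bounded `ω`.
-/

section PowerSums

variable {A : Type*} [NormedRing A] [NormOneClass A] {z : A}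

lemma norm_pow_sub_one_le (hz : ‖z‖ ≤ 1) (k : ℕ) : ‖z ^ k - 1‖ ≤ k * ‖z - 1‖ := by
  rw [← geom_sum_mul]
  refine (norm_mul_le _ _).trans (mul_le_mul_of_nonneg_right ?_ (norm_nonneg _))
  calc ‖∑ i ∈ Finset.range k, z ^ i‖
      ≤ ∑ _i ∈ Finset.range k, (1 : ℝ) := norm_sum_le_of_le _ fun i _ =>
        (norm_pow_le z i).trans (pow_le_one₀ (norm_nonneg z) hz)
    _ = k := by simp

lemma norm_sum_smul_pow_sub_one_le [NormedAlgebra ℝ A] (hz : ‖z‖ ≤ 1) {s : Finset ℕ}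
    {w : ℕ → ℝ} (hw₀ : ∀ k ∈ s, 0 ≤ w k) (hw₁ : ∑ k ∈ s, w k = 1) {d : ℕ}
    (hd : ∀ k ∈ s, k ≤ d) :
    ‖∑ k ∈ s, w k • z ^ k - 1‖ ≤ d * ‖z - 1‖ := by
  have pow_mem : ∀ k ∈ s, z ^ k ∈ Metric.closedBall (1 : A) (d * ‖z - 1‖) := fun k hk => by
    rw [mem_closedBall_iff_norm]
    exact (norm_pow_sub_one_le hz k).trans (by gcongr; exact hd k hk)
  exact mem_closedBall_iff_norm.1 ((convex_closedBall _ _).sum_mem hw₀ hw₁ pow_mem)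

end PowerSums

lemma tendstoUniformlyOn_prod_Ico_tprod {X R : Type*} [TopologicalSpace X] [NormedCommRing R]
    [NormOneClass R] [CompleteSpace R] {K : Set X} (hK : IsCompact K) {g : ℕ → X → R}
    (hg : ∀ k, ContinuousOn (g k) K) {u : ℕ → ℝ} (hu : Summable u)
    (hgu : ∀ᶠ k in atTop, ∀ x ∈ K, ‖g k x - 1‖ ≤ u k) (m : ℕ) :
    TendstoUniformlyOn (fun N x => ∏ k ∈ Finset.Ico m N, g k x) (fun x => ∏' k, g (m + k) x)
      atTop K := by
  have shift : Tendsto (m + ·) atTop atTop := tendsto_atTop_mono (Nat.le_add_left · m) tendsto_id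
  have hprod := (hu.comp_injective (add_right_injective m)).hasProdUniformlyOn_nat_one_add hK
    (shift.eventually hgu) fun k => (hg (m + k)).sub continuousOn_const
  simp only [add_sub_cancel] at hprod
  simp only [Finset.prod_Ico_eq_prod_range]
  exact fun V hV =>
    (tendsto_sub_atTop_nat m).eventually (hprod.tendstoUniformlyOn_finsetRange V hV)

lemma binomZ_nonneg (p : ℕ) (q : ℤ) : 0 ≤ binomZ p q := by
  unfold binomZ
  positivity

lemma binomZ_natCast (p k : ℕ) : binomZ p k = p.choose k := by
  simp [binomZ]

lemma sum_range_binomZ {p N : ℕ} (h : p < N) :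
    ∑ k ∈ Finset.range N, binomZ p k = 2 ^ p := by
  have choose_eq_zero : ∀ k ∈ Finset.range N, k ∉ Finset.range (p + 1) → p.choose k = 0 :=
    fun k _ hk => Nat.choose_eq_zero_of_lt (by simpa using hk)
  have sum_choose : ∑ k ∈ Finset.range N, p.choose k = 2 ^ p := by
    rw [← Finset.sum_subset (Finset.range_subset_range.2 h) choose_eq_zero,
      Nat.sum_range_choose]
  simp only [binomZ_natCast]
  exact_mod_cast sum_choose

lemma sum_range_succ_binomZ_sub_one (p N : ℕ) :
    ∑ k ∈ Finset.range (N + 1), binomZ p ((k : ℤ) - 1) = ∑ k ∈ Finset.range N, binomZ p k := by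
  rw [Finset.sum_range_succ']
  simp [binomZ]

lemma maskNS_nonneg (n m : ℕ) (μ : ℝ) (α : ℤ) : 0 ≤ maskNS n m μ α := by
  have tension_nonneg : 0 ≤ (2 : ℝ) ^ ((m : ℝ) ^ (-μ)) - 1 :=
    sub_nonneg.2 (Real.one_le_rpow one_le_two (by positivity))
  have := binomZ_nonneg (n + 1) α
  have := binomZ_nonneg (n - 1) (α - 1)
  unfold maskNS
  split_ifs <;> positivity

lemma sum_maskNS_zero (n : ℕ) (μ : ℝ) : ∑ α ∈ Finset.range (n + 2), maskNS n 0 μ α = 1 := by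
  rw [Finset.sum_range_succ', Finset.sum_range_succ', Finset.sum_eq_zero fun k _ => ?_]
  · norm_num [maskNS]
  · rw [maskNS, if_pos rfl, if_neg (by lia)]

lemma sum_maskNS_of_ne_zero {n : ℕ} (hn : 1 ≤ n) {m : ℕ} (hm : m ≠ 0) (μ : ℝ) :
    ∑ α ∈ Finset.range (n + 2), maskNS n m μ α = 1 := by
  set t : ℝ := (m : ℝ) ^ (-μ)
  have mask_eq : ∀ α ∈ Finset.range (n + 2), maskNS n m μ α =
      (2 : ℝ) ^ (-((n : ℝ) + 1 + t)) *
        (binomZ (n + 1) α + 4 * ((2 : ℝ) ^ t - 1) * binomZ (n - 1) ((α : ℤ) - 1)) := by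
    intro α hα
    have := Finset.mem_range.1 hα
    rw [maskNS, if_neg hm, if_pos (by lia)]
  have two_pow : (2 : ℝ) ^ (n + 1) = 4 * 2 ^ (n - 1) := by
    rw [show n + 1 = 2 + (n - 1) by lia, pow_add]
    norm_num
  have total : 2 ^ (n + 1) + 4 * ((2 : ℝ) ^ t - 1) * 2 ^ (n - 1) =
      (2 : ℝ) ^ ((n : ℝ) + 1 + t) := by
    rw [Real.rpow_add two_pos, ← Nat.cast_add_one, Real.rpow_natCast, two_pow]
    ring
  rw [Finset.sum_congr rfl mask_eq, ← Finset.mul_sum, Finset.sum_add_distrib, ← Finset.mul_sum,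
    sum_range_succ_binomZ_sub_one, sum_range_binomZ (by lia), sum_range_binomZ (by lia), total,
    ← Real.rpow_add two_pos, neg_add_cancel, Real.rpow_zero]

lemma sum_maskNS {n : ℕ} (hn : 1 ≤ n) (m : ℕ) (μ : ℝ) :
    ∑ α ∈ Finset.range (n + 2), maskNS n m μ α = 1 := by
  rcases eq_or_ne m 0 with rfl | hm
  · exact sum_maskNS_zero n μ
  · exact sum_maskNS_of_ne_zero hn hm μ

lemma continuous_symbolNS (n m : ℕ) (μ : ℝ) : Continuous (symbolNS n m μ) := by
  unfold symbolNS
  fun_prop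

lemma norm_symbolNS_sub_one_le {n : ℕ} (hn : 1 ≤ n) (m : ℕ) (μ : ℝ) {z : ℂ} (hz : ‖z‖ ≤ 1) :
    ‖symbolNS n m μ z - 1‖ ≤ (n + 1) * ‖z - 1‖ := by
  have h := norm_sum_smul_pow_sub_one_le hz (fun α _ => maskNS_nonneg n m μ α)
    (sum_maskNS hn m μ) (d := n + 1) fun α hα => Nat.lt_succ_iff.1 (Finset.mem_range.1 hα)
  simpa only [symbolNS, Complex.real_smul, Nat.cast_add_one] using h

/-- The `k`-th factor `A^{(n,k)}(e^{-iω/2^{k+1}})` of the infinite product `Φ^{(n,m)}(ω)`, as a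
function of `ω`. The argument `k` comes before `ω` so that `dilatedSymbolNS n μ` is a sequence
of functions. -/
noncomputable def dilatedSymbolNS (n : ℕ) (μ : ℝ) (k : ℕ) (ω : ℝ) : ℂ :=
  symbolNS n k μ (Complex.exp (-(Complex.I * ω) / 2 ^ (k + 1)))

lemma partialProdNS_eq_prod_dilatedSymbolNS (n m : ℕ) (μ ω : ℝ) (N : ℕ) :
    partialProdNS n m μ ω N = ∏ k ∈ Finset.Ico m N, dilatedSymbolNS n μ k ω :=
  rfl

lemma continuous_dilatedSymbolNS (n : ℕ) (μ : ℝ) (k : ℕ) :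
    Continuous (dilatedSymbolNS n μ k) :=
  (continuous_symbolNS n k μ).comp (by fun_prop)

lemma continuous_partialProdNS (n m : ℕ) (μ : ℝ) (N : ℕ) :
    Continuous fun ω => partialProdNS n m μ ω N := by
  simp only [partialProdNS_eq_prod_dilatedSymbolNS]
  exact continuous_finsetProd _ fun k _ => continuous_dilatedSymbolNS n μ k

lemma norm_dilatedSymbolNS_sub_one_le {n : ℕ} (hn : 1 ≤ n) (μ : ℝ) (k : ℕ) (ω : ℝ) :
    ‖dilatedSymbolNS n μ k ω - 1‖ ≤ (n + 1) * (|ω| / 2 / 2 ^ k) := by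
  have arg_eq : -(Complex.I * ω) / 2 ^ (k + 1) = Complex.I * ((-ω / 2 / 2 ^ k : ℝ) : ℂ) := by
    push_cast
    ring
  rw [dilatedSymbolNS, arg_eq]
  refine (norm_symbolNS_sub_one_le hn k μ (Complex.norm_exp_I_mul_ofReal _).le).trans ?_
  gcongr
  refine Real.norm_exp_I_mul_ofReal_sub_one_le.trans_eq ?_
  simp

lemma dilatedSymbolNS_zero_right {n : ℕ} (hn : 1 ≤ n) (μ : ℝ) (k : ℕ) :
    dilatedSymbolNS n μ k 0 = 1 := by
  have h := norm_dilatedSymbolNS_sub_one_le hn μ k 0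
  rw [abs_zero, zero_div, zero_div, mul_zero] at h
  exact sub_eq_zero.1 (norm_le_zero_iff.1 h)

/-- The infinite product `Φ^{(n,m)}(ω) = ∏_{k=m}^∞ A^{(n,k)}(e^{-iω/2^{k+1}})`, with the index
shifted to start at `0`. -/
noncomputable def infiniteProdNS (n m : ℕ) (μ ω : ℝ) : ℂ :=
  ∏' k, dilatedSymbolNS n μ (m + k) ω

lemma infiniteProdNS_zero_right {n : ℕ} (hn : 1 ≤ n) (m : ℕ) (μ : ℝ) :
    infiniteProdNS n m μ 0 = 1 := by
  simp only [infiniteProdNS, dilatedSymbolNS_zero_right hn, tprod_one]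

lemma tendstoUniformlyOn_partialProdNS {n : ℕ} (hn : 1 ≤ n) (m : ℕ) (μ : ℝ)
    {K : Set ℝ} (hK : IsCompact K) :
    TendstoUniformlyOn (fun N ω => partialProdNS n m μ ω N) (infiniteProdNS n m μ) atTop K := by
  obtain ⟨R, hR⟩ := hK.isBounded.exists_norm_le
  simp only [partialProdNS_eq_prod_dilatedSymbolNS]
  refine tendstoUniformlyOn_prod_Ico_tprod hK
    (fun k => (continuous_dilatedSymbolNS n μ k).continuousOn)
    ((summable_geometric_two' R).mul_left ((n : ℝ) + 1)) (.of_forall fun k ω hω => ?_) m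
  refine (norm_dilatedSymbolNS_sub_one_le hn μ k ω).trans ?_
  gcongr
  exact hR ω hω

lemma tendsto_partialProdNS {n : ℕ} (hn : 1 ≤ n) (m : ℕ) (μ ω : ℝ) :
    Tendsto (fun N => partialProdNS n m μ ω N) atTop (nhds (infiniteProdNS n m μ ω)) :=
  (tendstoUniformlyOn_partialProdNS hn m μ isCompact_singleton).tendsto_at rfl

lemma continuous_infiniteProdNS {n : ℕ} (hn : 1 ≤ n) (m : ℕ) (μ : ℝ) :
    Continuous (infiniteProdNS n m μ) :=
  (tendstoLocallyUniformly_iff_forall_isCompact.2 fun _ hK =>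
    tendstoUniformlyOn_partialProdNS hn m μ hK).continuous
      (Eventually.of_forall (continuous_partialProdNS n m μ)).frequently

theorem infinite_product_converges_general (n : ℕ) (hn : 1 ≤ n) (μ : ℝ) (m : ℕ) :
    ∃ Φ : ℝ → ℂ, Continuous Φ ∧ Φ 0 = 1 ∧
      (∀ ω : ℝ, Tendsto (fun N => partialProdNS n m μ ω N) atTop (nhds (Φ ω))) ∧
      (∀ K : Set ℝ, IsCompact K →
        TendstoUniformlyOn (fun N ω => partialProdNS n m μ ω N) Φ atTop K) :=
  ⟨infiniteProdNS n m μ, continuous_infiniteProdNS hn m μ, infiniteProdNS_zero_right hn m μ,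
    tendsto_partialProdNS hn m μ, fun _ hK => tendstoUniformlyOn_partialProdNS hn m μ hK⟩

/-- The infinite product `Φ^{(n,m)}(ω) = ∏_{k=m}^∞ A^{(n,k)}(e^{-iω/2^{k+1}})` converges for
every `ω` (uniformly on compact subsets of `ℝ`), and the limit is continuous with value `1`
at `ω = 0`. -/
theorem infinite_product_converges (n : ℕ) (hn : 2 ≤ n) (μ : ℝ) (hμ : 1 < μ) (m : ℕ) :
    ∃ Φ : ℝ → ℂ, Continuous Φ ∧ Φ 0 = 1 ∧
      (∀ ω : ℝ, Tendsto (fun N => partialProdNS n m μ ω N) atTop (nhds (Φ ω))) ∧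
      (∀ K : Set ℝ, IsCompact K →
        TendstoUniformlyOn (fun N ω => partialProdNS n m μ ω N) Φ atTop K) :=
  infinite_product_converges_general n (one_le_two.trans hn) μ m
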